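/- For the unit square grid (a = b = 1), the infimum L(N) of lengths of segments visiting at least N tiles satisfies: L(N) = 0 for N ∈ {1, 2}, and L(N) = √(⌈(N−3)²/2⌉) for every integer N ≥ 3. -/

import Mathlib

open Set

/-- Interior of the tile `T(k,l)` of the `a×b` grid. -/
noncomputable def tileInt (a b : ℝ) (k l : ℤ) : Set (ℝ × ℝ) :=
  Set.Ioo ((k : ℝ) * a) (((k : ℝ) + 1) * a) ×ˢ Set.Ioo ((l : ℝ) * b) (((l : ℝ) + 1) * b)

/-- Number of tiles of the `a×b` grid visited by the closed segment with endpoints `p`, `q`. -/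
noncomputable def visitCount (a b : ℝ) (p q : ℝ × ℝ) : ℕ :=
  Set.ncard {kl : ℤ × ℤ | (segment ℝ p q ∩ tileInt a b kl.1 kl.2).Nonempty}

/-- Normalized width of the discrete bounding rectangle of the segment with endpoints `p`, `q`. -/
noncomputable def normWidth (a : ℝ) (p q : ℝ × ℝ) : ℤ :=
  ⌈max p.1 q.1 / a⌉ - ⌊min p.1 q.1 / a⌋

/-- Normalized height of the discrete bounding rectangle of the segment with endpoints `p`, `q`. -/
noncomputable def normHeight (b : ℝ) (p q : ℝ × ℝ) : ℤ :=
  ⌈max p.2 q.2 / b⌉ - ⌊min p.2 q.2 / b⌋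

/-- Euclidean length of the segment with endpoints `p`, `q`. -/
noncomputable def segLen (p q : ℝ × ℝ) : ℝ :=
  Real.sqrt ((p.1 - q.1) ^ 2 + (p.2 - q.2) ^ 2)

/-- `maxTiles a b ℓ` : maximum number of tiles of the `a×b` grid visited by a segment of length `ℓ`. -/
noncomputable def maxTiles (a b ℓ : ℝ) : ℕ :=
  sSup {n : ℕ | ∃ p q : ℝ × ℝ, segLen p q = ℓ ∧ visitCount a b p q = n}

/-- `infLen a b N` : infimum of lengths of segments visiting at least `N` tiles of the `a×b` grid. -/
noncomputable def infLen (a b : ℝ) (N : ℕ) : ℝ :=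
  sInf {ℓ : ℝ | 0 < ℓ ∧ ∃ p q : ℝ × ℝ, segLen p q = ℓ ∧ N ≤ visitCount a b p q}

/-- `minIntLen N` : minimum positive integer length of a segment visiting at least `N` tiles
of the unit square grid. -/
noncomputable def minIntLen (N : ℕ) : ℕ :=
  sInf {L : ℕ | 1 ≤ L ∧ ∃ p q : ℝ × ℝ, segLen p q = (L : ℝ) ∧ N ≤ visitCount 1 1 p q}

/-!
A segment increasing in both coordinates visits a chain of tiles for the product order on `ℤ × ℤ`,
so the number of visited tiles is at most `W + H - 1`, where `W × H` is the size in tiles of the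
discrete bounding rectangle; equality holds when the segment avoids the lattice points, since it
then enters exactly one new tile at each grid line it crosses. As the sides of the segment's own
bounding box are at least `(W - 2) a` and `(H - 2) b`, visiting `n + 3` tiles forces length at least
`√((w a)² + (h b)²)` for some `w + h = n`. Conversely, a slight extension and perturbation of the
segment from the origin to `(w a, h b)` avoids the lattice points and visits `w + h + 3` tiles.
For `a = b = 1` the minimum over `w + h = n` is attained when `|w - h| ≤ 1`.
-/

theorem isChain_segment {E : Type*} [AddCommGroup E] [PartialOrder E] [IsOrderedAddMonoid E]
    [Module ℝ E] [SMulPosMono ℝ E] {x y : E} (hxy : x ≤ y) :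
    IsChain (· ≤ ·) (segment ℝ x y) := by
  rw [segment_eq_image_lineMap]
  exact (isChain_of_trichotomous _).image_of_map_rel _ _ _ fun _ _ h ↦ AffineMap.lineMap_mono hxy h

theorem injOn_fst_add_snd_of_isChain {S : Set (ℤ × ℤ)} (hS : IsChain (· ≤ ·) S) :
    InjOn (fun z ↦ z.1 + z.2) S := by
  intro z hz z' hz' hsum
  rcases hS.total hz hz' with hle | hle <;>
  · have hcoord := Prod.le_def.1 hle
    dsimp only at hsum
    ext <;> lia

theorem ncard_le_of_isChain_of_subset_Icc {S : Set (ℤ × ℤ)} {u v : ℤ × ℤ}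
    (hS : IsChain (· ≤ ·) S) (hSuv : S ⊆ Icc u v) :
    S.ncard ≤ ((v.1 + v.2 + 1) - (u.1 + u.2)).toNat := by
  have hmaps : ∀ z ∈ S, z.1 + z.2 ∈ (Finset.Icc (u.1 + u.2) (v.1 + v.2) : Set ℤ) := by
    intro z hz
    have hz := hSuv hz
    simp only [mem_Icc, Prod.le_def, Finset.coe_Icc] at hz ⊢
    lia
  calc S.ncard ≤ (Finset.Icc (u.1 + u.2) (v.1 + v.2) : Set ℤ).ncard :=
        ncard_le_ncard_of_injOn _ hmaps (injOn_fst_add_snd_of_isChain hS)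
    _ = ((v.1 + v.2 + 1) - (u.1 + u.2)).toNat := by
        rw [ncard_coe_finset, Int.card_Icc]

/-- The tiles of the `a×b` grid visited by the segment with endpoints `p`, `q`, a tile being encoded
by its index `(k, l)`; `visitCount` is the cardinality of this set. -/
def visitedTiles (a b : ℝ) (p q : ℝ × ℝ) : Set (ℤ × ℤ) :=
  {kl | (segment ℝ p q ∩ tileInt a b kl.1 kl.2).Nonempty}

section Grid

variable {a b : ℝ} {p q : ℝ × ℝ}

theorem ncard_visitedTiles : (visitedTiles a b p q).ncard = visitCount a b p q := rfl

theorem mem_visitedTiles_iff_lineMap {k l : ℤ} :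
    (k, l) ∈ visitedTiles a b p q ↔
      ∃ t ∈ Icc (0 : ℝ) 1, AffineMap.lineMap p q t ∈ tileInt a b k l := by
  simp only [visitedTiles, segment_eq_image_lineMap, mem_ofPred_eq]
  exact image_inter_nonempty_iff

theorem mem_tileInt_iff (ha : 0 < a) (hb : 0 < b) {r : ℝ × ℝ} {k l : ℤ} :
    r ∈ tileInt a b k l ↔
      r.1 / a ∈ Ioo (k : ℝ) (k + 1) ∧ r.2 / b ∈ Ioo (l : ℝ) (l + 1) := by
  simp only [tileInt, mem_prod, mem_Ioo, lt_div_iff₀, div_lt_iff₀, ha, hb]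

theorem visitCount_symm : visitCount a b p q = visitCount a b q p := by
  simp only [visitCount, segment_symm ℝ p q]

theorem normWidth_symm : normWidth a p q = normWidth a q p := by
  simp only [normWidth, max_comm, min_comm]

theorem normHeight_symm : normHeight b p q = normHeight b q p := by
  simp only [normHeight, max_comm, min_comm]

theorem visitCount_reflect :
    visitCount a b (p.1, -p.2) (q.1, -q.2) = visitCount a b p q := by
  have hpreimage : visitedTiles a b (p.1, -p.2) (q.1, -q.2) =
      Equiv.prodCongr (.refl ℤ) (.subLeft (-1)) ⁻¹' visitedTiles a b p q := by
    ext ⟨k, l⟩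
    simp only [mem_preimage, Equiv.prodCongr_apply, Prod.map_apply, mem_visitedTiles_iff_lineMap]
    refine exists_congr fun t ↦ and_congr_right fun _ ↦ ?_
    have hneg : AffineMap.lineMap (-p.2) (-q.2) t = -AffineMap.lineMap p.2 q.2 t := by
      simp only [AffineMap.lineMap_apply_ring']
      ring
    simp only [tileInt, mem_prod, mem_Ioo, AffineMap.fst_lineMap, AffineMap.snd_lineMap, hneg,
      Equiv.refl_apply, Equiv.subLeft_apply]
    push_cast
    grind
  rw [← ncard_visitedTiles, ← ncard_visitedTiles, hpreimage]
  exact ncard_preimage_of_injective_subset_range (Equiv.injective _) (by simp)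

theorem normHeight_reflect :
    normHeight b (p.1, -p.2) (q.1, -q.2) = normHeight b p q := by
  simp only [normHeight, max_neg_neg, min_neg_neg, neg_div, Int.ceil_neg, Int.floor_neg]
  ring

theorem visitedTiles_subset_Icc (ha : 0 < a) (hb : 0 < b) (hpq : p ≤ q) :
    visitedTiles a b p q ⊆
      Icc (⌊p.1 / a⌋, ⌊p.2 / b⌋) (⌈q.1 / a⌉ - 1, ⌈q.2 / b⌉ - 1) := by
  rintro ⟨k, l⟩ ⟨r, hr, hrkl⟩
  obtain ⟨⟨hk, hk'⟩, hl, hl'⟩ := (mem_tileInt_iff ha hb).1 hrkl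
  obtain ⟨⟨hpr₁, hpr₂⟩, hrq₁, hrq₂⟩ := segment_subset_Icc hpq hr
  refine ⟨⟨Int.lt_add_one_iff.1 (Int.floor_lt.2 ?_), Int.lt_add_one_iff.1 (Int.floor_lt.2 ?_)⟩,
    Int.le_sub_one_iff.2 (Int.lt_ceil.2 ?_), Int.le_sub_one_iff.2 (Int.lt_ceil.2 ?_)⟩
  · push_cast; exact (by gcongr : p.1 / a ≤ r.1 / a).trans_lt hk'
  · push_cast; exact (by gcongr : p.2 / b ≤ r.2 / b).trans_lt hl'
  · exact hk.trans_le (by gcongr)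
  · exact hl.trans_le (by gcongr)

theorem tileIndex_le_of_le (ha : 0 < a) (hb : 0 < b) {r s : ℝ × ℝ} {k l k' l' : ℤ}
    (hr : r ∈ tileInt a b k l) (hs : s ∈ tileInt a b k' l') (hrs : r ≤ s) :
    (k, l) ≤ (k', l') := by
  obtain ⟨⟨hk, -⟩, hl, -⟩ := (mem_tileInt_iff ha hb).1 hr
  obtain ⟨⟨-, hk'⟩, -, hl'⟩ := (mem_tileInt_iff ha hb).1 hs
  have hrs₁ : r.1 / a ≤ s.1 / a := by gcongr; exact hrs.1
  have hrs₂ : r.2 / b ≤ s.2 / b := by gcongr; exact hrs.2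
  constructor
  · exact Int.lt_add_one_iff.1 (by exact_mod_cast hk.trans_le hrs₁ |>.trans hk')
  · exact Int.lt_add_one_iff.1 (by exact_mod_cast hl.trans_le hrs₂ |>.trans hl')

theorem isChain_visitedTiles (ha : 0 < a) (hb : 0 < b) (hpq : p ≤ q) :
    IsChain (· ≤ ·) (visitedTiles a b p q) := by
  rintro ⟨k, l⟩ ⟨r, hr, hrkl⟩ ⟨k', l'⟩ ⟨s, hs, hskl⟩ -
  exact (isChain_segment hpq).total hr hs |>.imp
    (tileIndex_le_of_le ha hb hrkl hskl) (tileIndex_le_of_le ha hb hskl hrkl)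

theorem visitCount_le_of_le (ha : 0 < a) (hb : 0 < b) (hpq : p ≤ q) :
    visitCount a b p q ≤ (normWidth a p q + normHeight b p q - 1).toNat := by
  have hcard := ncard_le_of_isChain_of_subset_Icc (isChain_visitedTiles ha hb hpq)
    (visitedTiles_subset_Icc ha hb hpq)
  simp only [ncard_visitedTiles] at hcard
  simp only [normWidth, normHeight, max_eq_right hpq.1, max_eq_right hpq.2, min_eq_left hpq.1,
    min_eq_left hpq.2]
  lia

theorem visitCount_le (ha : 0 < a) (hb : 0 < b) :
    visitCount a b p q ≤ (normWidth a p q + normHeight b p q - 1).toNat := by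
  wlog h₁ : p.1 ≤ q.1 generalizing p q
  · rw [visitCount_symm, normWidth_symm, normHeight_symm]
    exact this (le_of_not_ge h₁)
  rcases le_total p.2 q.2 with h₂ | h₂
  · exact visitCount_le_of_le ha hb ⟨h₁, h₂⟩
  · rw [← visitCount_reflect, ← normHeight_reflect]
    exact visitCount_le_of_le (p := (p.1, -p.2)) (q := (q.1, -q.2)) ha hb ⟨h₁, neg_le_neg h₂⟩

theorem ceil_max_sub_floor_min_sub_two_mul_le {c : ℝ} (hc : 0 < c) (x y : ℝ) :
    ((⌈max x y / c⌉ - ⌊min x y / c⌋ - 2 : ℤ) : ℝ) * c ≤ |x - y| := by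
  have hceil := Int.ceil_lt_add_one (max x y / c)
  have hfloor := Int.lt_floor_add_one (min x y / c)
  rw [← max_sub_min_eq_abs', ← le_div_iff₀ hc, sub_div]
  push_cast
  linarith

theorem exists_add_eq_sqrt_le_segLen (ha : 0 < a) (hb : 0 < b) {n : ℕ}
    (hn : n + 3 ≤ visitCount a b p q) :
    ∃ w h : ℕ, w + h = n ∧ √((w * a) ^ 2 + (h * b) ^ 2) ≤ segLen p q := by
  have hcount := hn.trans (visitCount_le ha hb)
  have hwidth : (normWidth a p q - 2 : ℤ) * a ≤ |p.1 - q.1| :=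
    ceil_max_sub_floor_min_sub_two_mul_le ha _ _
  have hheight : (normHeight b p q - 2 : ℤ) * b ≤ |p.2 - q.2| :=
    ceil_max_sub_floor_min_sub_two_mul_le hb _ _
  have mul_le_abs {m : ℕ} {M : ℤ} {c x : ℝ} (hc : 0 < c) (hM : M * c ≤ |x|)
      (hm : m = 0 ∨ (m : ℤ) ≤ M) : m * c ≤ |x| := by
    rcases hm with rfl | hm
    · simp
    · exact (mul_le_mul_of_nonneg_right (by exact_mod_cast hm) hc.le).trans hM
  obtain ⟨w, h, hwh, hw, hh⟩ : ∃ w h : ℕ, w + h = n ∧ (w = 0 ∨ (w : ℤ) ≤ normWidth a p q - 2) ∧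
      (h = 0 ∨ (h : ℤ) ≤ normHeight b p q - 2) :=
    ⟨min n (normWidth a p q - 2).toNat, n - min n (normWidth a p q - 2).toNat, by lia⟩
  refine ⟨w, h, hwh, Real.sqrt_le_sqrt ?_⟩
  rw [← sq_abs (p.1 - q.1), ← sq_abs (p.2 - q.2)]
  gcongr
  · exact mul_le_abs ha hwidth hw
  · exact mul_le_abs hb hheight hh

end Grid

section Crossings

variable {u v : ℝ}

/-- For `u < v`, the parameters `t ∈ (0, 1)` at which `AffineMap.lineMap u v t` is an integer. -/
noncomputable def integerCrossings (u v : ℝ) : Finset ℝ :=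
  (Finset.Ioo ⌊u⌋ ⌈v⌉).image fun k : ℤ ↦ ((k : ℝ) - u) / (v - u)

theorem card_integerCrossings (huv : u < v) :
    ((integerCrossings u v).card : ℤ) = ⌈v⌉ - ⌊u⌋ - 1 := by
  have hinj : Function.Injective fun k : ℤ ↦ ((k : ℝ) - u) / (v - u) := fun k k' h ↦ by
    simpa [div_left_inj' (sub_pos.2 huv).ne'] using h
  have hfloor_lt_ceil : ⌊u⌋ < ⌈v⌉ := Int.floor_lt_ceil_of_lt huv
  rw [integerCrossings, Finset.card_image_of_injective _ hinj, Int.card_Ioo]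
  lia

theorem mem_Ioo_of_mem_integerCrossings {t : ℝ} (ht : t ∈ integerCrossings u v) :
    t ∈ Ioo 0 1 := by
  obtain ⟨k, hk, rfl⟩ := Finset.mem_image.1 ht
  obtain ⟨hku, hkv⟩ := Finset.mem_Ioo.1 hk
  have huk : u < k := Int.floor_lt.1 hku
  have hkv : (k : ℝ) < v := Int.lt_ceil.1 hkv
  exact ⟨div_pos (by linarith) (by linarith), (div_lt_one (by linarith)).2 (by linarith)⟩

theorem exists_lineMap_eq_intCast_of_mem_integerCrossings (huv : u < v) {t : ℝ}
    (ht : t ∈ integerCrossings u v) : ∃ k : ℤ, AffineMap.lineMap u v t = (k : ℝ) := by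
  obtain ⟨k, -, rfl⟩ := Finset.mem_image.1 ht
  refine ⟨k, ?_⟩
  rw [AffineMap.lineMap_apply_ring', div_mul_cancel₀ _ (sub_pos.2 huv).ne', sub_add_cancel]

theorem floor_lineMap_lt_of_mem_integerCrossings (huv : u < v) {s t : ℝ} (hst : s < t)
    (ht : t ∈ integerCrossings u v) :
    ⌊AffineMap.lineMap u v s⌋ < ⌊AffineMap.lineMap u v t⌋ := by
  obtain ⟨k, hk⟩ := exists_lineMap_eq_intCast_of_mem_integerCrossings huv ht
  rw [hk, Int.floor_intCast, Int.floor_lt, ← hk]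
  exact (lineMap_lt_lineMap_iff_of_lt hst).2 huv

open Filter Topology in
theorem eventually_lineMap_mem_Ioo_floor (huv : u < v) (c : ℝ) :
    ∀ᶠ t in 𝓝[>] c, AffineMap.lineMap u v t ∈
      Ioo (⌊AffineMap.lineMap u v c⌋ : ℝ) (⌊AffineMap.lineMap u v c⌋ + 1) := by
  have hlt : ∀ᶠ t in 𝓝[>] c, AffineMap.lineMap u v t < (⌊AffineMap.lineMap u v c⌋ + 1 : ℝ) :=
    (AffineMap.lineMap_continuous.tendsto c).eventually_lt_const (Int.lt_floor_add_one _)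
      |>.filter_mono nhdsWithin_le_nhds
  filter_upwards [hlt, self_mem_nhdsWithin] with t htlt hct
  exact ⟨(Int.floor_le _).trans_lt ((lineMap_lt_lineMap_iff_of_lt hct).2 huv), htlt⟩

end Crossings

section GridCrossings

variable {a b : ℝ} {p q : ℝ × ℝ}

/-- The index of the half-open tile `[ka, (k+1)a) × [lb, (l+1)b)` containing the point `r`. -/
noncomputable def tileIndex (a b : ℝ) (r : ℝ × ℝ) : ℤ × ℤ := (⌊r.1 / a⌋, ⌊r.2 / b⌋)

/-- The parameters `t ∈ (0, 1)` at which the segment from `p` to `q`, increasing in both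
coordinates, crosses a line of the `a×b` grid. -/
noncomputable def gridCrossings (a b : ℝ) (p q : ℝ × ℝ) : Finset ℝ :=
  integerCrossings (p.1 / a) (q.1 / a) ∪ integerCrossings (p.2 / b) (q.2 / b)

theorem lineMap_fst_div (t : ℝ) :
    (AffineMap.lineMap p q t).1 / a = AffineMap.lineMap (p.1 / a) (q.1 / a) t := by
  simp only [AffineMap.fst_lineMap, AffineMap.lineMap_apply_ring']
  ring

theorem lineMap_snd_div (t : ℝ) :
    (AffineMap.lineMap p q t).2 / b = AffineMap.lineMap (p.2 / b) (q.2 / b) t := by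
  simp only [AffineMap.snd_lineMap, AffineMap.lineMap_apply_ring']
  ring

theorem mem_Ioo_of_mem_gridCrossings {t : ℝ} (ht : t ∈ gridCrossings a b p q) : t ∈ Ioo 0 1 :=
  (Finset.mem_union.1 ht).elim mem_Ioo_of_mem_integerCrossings mem_Ioo_of_mem_integerCrossings

theorem tileIndex_lineMap_mem_visitedTiles (ha : 0 < a) (hb : 0 < b) (h₁ : p.1 < q.1)
    (h₂ : p.2 < q.2) {c : ℝ} (hc : c ∈ Ico 0 1) :
    tileIndex a b (AffineMap.lineMap p q c) ∈ visitedTiles a b p q := by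
  obtain ⟨t, hfst, hsnd, hct⟩ :=
    ((eventually_lineMap_mem_Ioo_floor (div_lt_div_of_pos_right h₁ ha) c).and
      ((eventually_lineMap_mem_Ioo_floor (div_lt_div_of_pos_right h₂ hb) c).and
        (Ioo_mem_nhdsGT hc.2))).exists
  refine mem_visitedTiles_iff_lineMap.2 ⟨t, ⟨hc.1.trans hct.1.le, hct.2.le⟩, ?_⟩
  rw [mem_tileInt_iff ha hb]
  simp only [lineMap_fst_div, lineMap_snd_div]
  exact ⟨hfst, hsnd⟩

theorem tileIndex_lineMap_ne_of_lt (ha : 0 < a) (hb : 0 < b) (h₁ : p.1 < q.1)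
    (h₂ : p.2 < q.2) {s t : ℝ} (hst : s < t) (ht : t ∈ gridCrossings a b p q) :
    tileIndex a b (AffineMap.lineMap p q s) ≠ tileIndex a b (AffineMap.lineMap p q t) := by
  simp only [tileIndex, lineMap_fst_div, lineMap_snd_div, ne_eq, Prod.mk.injEq, not_and_or]
  exact (Finset.mem_union.1 ht).imp
    (fun ht ↦
      (floor_lineMap_lt_of_mem_integerCrossings (div_lt_div_of_pos_right h₁ ha) hst ht).ne)
    (fun ht ↦
      (floor_lineMap_lt_of_mem_integerCrossings (div_lt_div_of_pos_right h₂ hb) hst ht).ne)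

theorem injOn_tileIndex_lineMap_insert_gridCrossings (ha : 0 < a) (hb : 0 < b)
    (h₁ : p.1 < q.1) (h₂ : p.2 < q.2) :
    InjOn (fun t : ℝ ↦ tileIndex a b (AffineMap.lineMap p q t))
      (insert 0 (gridCrossings a b p q) : Finset ℝ) := by
  have nonneg {t : ℝ} (ht : t ∈ insert 0 (gridCrossings a b p q)) : 0 ≤ t :=
    (Finset.mem_insert.1 ht).elim (fun h ↦ h.ge) fun h ↦ (mem_Ioo_of_mem_gridCrossings h).1.le
  have tileIndex_ne {s t : ℝ} (hs : s ∈ insert 0 (gridCrossings a b p q))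
      (ht : t ∈ insert 0 (gridCrossings a b p q)) (hst : s < t) :
      tileIndex a b (AffineMap.lineMap p q s) ≠ tileIndex a b (AffineMap.lineMap p q t) :=
    tileIndex_lineMap_ne_of_lt ha hb h₁ h₂ hst
      (Finset.mem_of_mem_insert_of_ne ht ((nonneg hs).trans_lt hst).ne')
  intro s hs t ht heq
  rcases lt_trichotomy s t with hst | hst | hts
  · exact absurd heq (tileIndex_ne hs ht hst)
  · exact hst
  · exact absurd heq.symm (tileIndex_ne ht hs hts)

theorem disjoint_integerCrossings (ha : 0 < a) (hb : 0 < b) (h₁ : p.1 < q.1) (h₂ : p.2 < q.2)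
    (hlattice : ∀ k l : ℤ, ((k * a, l * b) : ℝ × ℝ) ∉ openSegment ℝ p q) :
    Disjoint (integerCrossings (p.1 / a) (q.1 / a)) (integerCrossings (p.2 / b) (q.2 / b)) := by
  refine Finset.disjoint_left.2 fun t ht₁ ht₂ ↦ ?_
  obtain ⟨k, hk⟩ :=
    exists_lineMap_eq_intCast_of_mem_integerCrossings (div_lt_div_of_pos_right h₁ ha) ht₁
  obtain ⟨l, hl⟩ :=
    exists_lineMap_eq_intCast_of_mem_integerCrossings (div_lt_div_of_pos_right h₂ hb) ht₂
  rw [← lineMap_fst_div, div_eq_iff ha.ne'] at hk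
  rw [← lineMap_snd_div, div_eq_iff hb.ne'] at hl
  apply hlattice k l
  rw [openSegment_eq_image_lineMap]
  exact ⟨t, mem_Ioo_of_mem_integerCrossings ht₁, Prod.ext hk hl⟩

theorem card_gridCrossings_add_two (ha : 0 < a) (hb : 0 < b) (h₁ : p.1 < q.1) (h₂ : p.2 < q.2)
    (hlattice : ∀ k l : ℤ, ((k * a, l * b) : ℝ × ℝ) ∉ openSegment ℝ p q) :
    ((gridCrossings a b p q).card : ℤ) + 2 = normWidth a p q + normHeight b p q := by
  rw [gridCrossings, Finset.card_union_of_disjoint (disjoint_integerCrossings ha hb h₁ h₂ hlattice),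
    Nat.cast_add, card_integerCrossings (div_lt_div_of_pos_right h₁ ha),
    card_integerCrossings (div_lt_div_of_pos_right h₂ hb), normWidth, normHeight,
    max_eq_right h₁.le, max_eq_right h₂.le, min_eq_left h₁.le, min_eq_left h₂.le]
  ring

-- Each crossing of a grid line is charged to the tile entered there, the parameter `0` to the
-- first tile.
theorem normWidth_add_normHeight_le_visitCount_add_one (ha : 0 < a) (hb : 0 < b)
    (h₁ : p.1 < q.1) (h₂ : p.2 < q.2)
    (hlattice : ∀ k l : ℤ, ((k * a, l * b) : ℝ × ℝ) ∉ openSegment ℝ p q) :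
    normWidth a p q + normHeight b p q ≤ visitCount a b p q + 1 := by
  have zero_notMem : (0 : ℝ) ∉ gridCrossings a b p q := fun h ↦
    (mem_Ioo_of_mem_gridCrossings h).1.false
  have mapsTo : ∀ t ∈ (insert 0 (gridCrossings a b p q) : Finset ℝ),
      tileIndex a b (AffineMap.lineMap p q t) ∈ visitedTiles a b p q := by
    refine fun t ht ↦ tileIndex_lineMap_mem_visitedTiles ha hb h₁ h₂ ?_
    rcases Finset.mem_insert.1 ht with rfl | ht
    · exact ⟨le_rfl, one_pos⟩
    · exact Ioo_subset_Ico_self (mem_Ioo_of_mem_gridCrossings ht)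
  have hfinite : (visitedTiles a b p q).Finite :=
    (finite_Icc _ _).subset (visitedTiles_subset_Icc ha hb ⟨h₁.le, h₂.le⟩)
  have hle : (gridCrossings a b p q).card + 1 ≤ visitCount a b p q := by
    rw [← Finset.card_insert_of_notMem zero_notMem, ← ncard_coe_finset, ← ncard_visitedTiles]
    exact ncard_le_ncard_of_injOn _ mapsTo
      (injOn_tileIndex_lineMap_insert_gridCrossings ha hb h₁ h₂) hfinite
  rw [← card_gridCrossings_add_two ha hb h₁ h₂ hlattice]
  lia

end GridCrossings

section InfLen

variable {a b : ℝ}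

-- Each lattice point lies on the segment for at most one `η`, so only countably many `η` are bad.
theorem exists_forall_lattice_notMem_openSegment (ha : 0 < a) (hb : 0 < b) {δ : ℝ}
    (hδ : δ ∈ Ioo 0 1) (x y : ℝ) :
    ∃ η ∈ Ioo 0 δ, ∀ k l : ℤ, ((k * a, l * b) : ℝ × ℝ) ∉
      openSegment ℝ (-δ * a, -δ * b) (x * a, (y + η) * b) := by
  let badHeight (z : ℤ × ℤ) : ℝ := (z.2 + δ) * (x + δ) / (z.1 + δ) - δ - y
  obtain ⟨η, hη, hη_Ioo⟩ :=
    ((countable_range badHeight).dense_compl ℝ).exists_between hδ.1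
  refine ⟨η, hη_Ioo, fun k l hkl ↦ hη ⟨(k, l), ?_⟩⟩
  rw [openSegment_eq_image_lineMap] at hkl
  obtain ⟨t, -, ht⟩ := hkl
  have hk : (k : ℝ) + δ = t * (x + δ) := by
    have := congrArg Prod.fst ht
    simp only [AffineMap.fst_lineMap, AffineMap.lineMap_apply_ring'] at this
    apply mul_right_cancel₀ ha.ne'
    linarith
  have hl : (l : ℝ) + δ = t * (y + η + δ) := by
    have := congrArg Prod.snd ht
    simp only [AffineMap.snd_lineMap, AffineMap.lineMap_apply_ring'] at this
    apply mul_right_cancel₀ hb.ne'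
    linarith
  have hk_ne : (k : ℝ) + δ ≠ 0 := by
    intro h0
    have hlt : (-1 : ℝ) < k := by linarith [hδ.2]
    have hgt : (k : ℝ) < 0 := by linarith [hδ.1]
    norm_cast at hlt hgt
    lia
  have hcross : ((l : ℝ) + δ) * (x + δ) = (y + η + δ) * (k + δ) := by
    rw [hk, hl]
    ring
  simp only [badHeight, hcross, mul_div_cancel_right₀ _ hk_ne]
  ring

theorem ceil_natCast_add_sub_floor_neg {w : ℕ} {δ η : ℝ} (hδ : δ ∈ Ioo 0 1) (hη : η ∈ Ioo 0 1) :
    ⌈(w : ℝ) + η⌉ - ⌊-δ⌋ = w + 2 := by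
  have hceil : ⌈η⌉ = 1 := Int.ceil_eq_iff.2 ⟨by simpa using hη.1, by simpa using hη.2.le⟩
  have hfloor : ⌊-δ⌋ = -1 :=
    Int.floor_eq_iff.2 ⟨by simpa using hδ.2.le, by simpa using hδ.1⟩
  rw [Int.ceil_natCast_add, hceil, hfloor]
  ring

theorem exists_segment_add_three_le_visitCount (ha : 0 < a) (hb : 0 < b) (w h : ℕ) {δ : ℝ}
    (hδ : δ ∈ Ioo 0 1) :
    ∃ p q : ℝ × ℝ, 0 < segLen p q ∧ w + h + 3 ≤ visitCount a b p q ∧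
      segLen p q ≤ √(((w + 2 * δ) * a) ^ 2 + ((h + 2 * δ) * b) ^ 2) := by
  obtain ⟨η, hη, hlattice⟩ := exists_forall_lattice_notMem_openSegment ha hb hδ (w + δ) h
  have hη' : η ∈ Ioo 0 1 := ⟨hη.1, hη.2.trans hδ.2⟩
  have hδ0 : 0 < δ := hδ.1
  have hη0 : 0 < η := hη.1
  set p : ℝ × ℝ := (-δ * a, -δ * b) with hp
  set q : ℝ × ℝ := ((w + δ) * a, (h + η) * b) with hq
  have h₁ : p.1 < q.1 := mul_lt_mul_of_pos_right (by linarith [w.cast_nonneg (α := ℝ)]) ha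
  have h₂ : p.2 < q.2 := mul_lt_mul_of_pos_right (by linarith [h.cast_nonneg (α := ℝ)]) hb
  have hwidth : normWidth a p q = w + 2 := by
    rw [normWidth, max_eq_right h₁.le, min_eq_left h₁.le, hp, hq]
    simpa only [mul_div_cancel_right₀ _ ha.ne'] using ceil_natCast_add_sub_floor_neg hδ hδ
  have hheight : normHeight b p q = h + 2 := by
    rw [normHeight, max_eq_right h₂.le, min_eq_left h₂.le, hp, hq]
    simpa only [mul_div_cancel_right₀ _ hb.ne'] using ceil_natCast_add_sub_floor_neg hδ hη'
  have hcount := normWidth_add_normHeight_le_visitCount_add_one ha hb h₁ h₂ hlattice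
  refine ⟨p, q, Real.sqrt_pos.2 ?_, by lia, Real.sqrt_le_sqrt ?_⟩
  · have := sub_ne_zero.2 h₁.ne
    positivity
  · have hfst : p.1 - q.1 = -((w + 2 * δ) * a) := by rw [hp, hq]; ring
    have hsnd : p.2 - q.2 = -((h + (δ + η)) * b) := by rw [hp, hq]; ring
    rw [hfst, hsnd, neg_sq, neg_sq]
    gcongr
    linarith [hη.2]

theorem infLen_nonneg (N : ℕ) : 0 ≤ infLen a b N := Real.sInf_nonneg fun _ hℓ ↦ hℓ.1.le

theorem infLen_le_segLen {N : ℕ} {p q : ℝ × ℝ} (hpos : 0 < segLen p q)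
    (hN : N ≤ visitCount a b p q) : infLen a b N ≤ segLen p q :=
  csInf_le ⟨0, fun _ hℓ ↦ hℓ.1.le⟩ ⟨hpos, p, q, rfl, hN⟩

open Filter Topology in
theorem infLen_le_sqrt (ha : 0 < a) (hb : 0 < b) {N w h : ℕ} (hN : N ≤ w + h + 3) :
    infLen a b N ≤ √((w * a) ^ 2 + (h * b) ^ 2) := by
  have htendsto : Tendsto (fun δ : ℝ ↦ √(((w + 2 * δ) * a) ^ 2 + ((h + 2 * δ) * b) ^ 2)) (𝓝[>] 0)
      (𝓝 (√((w * a) ^ 2 + (h * b) ^ 2))) := by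
    refine Tendsto.mono_left (Continuous.tendsto' (by fun_prop) _ _ ?_) nhdsWithin_le_nhds
    simp only [mul_zero, add_zero]
  refine ge_of_tendsto htendsto ?_
  filter_upwards [Ioo_mem_nhdsGT one_pos] with δ hδ
  obtain ⟨p, q, hpos, hcount, hlen⟩ := exists_segment_add_three_le_visitCount ha hb w h hδ
  exact (infLen_le_segLen hpos (hN.trans hcount)).trans hlen

theorem infLen_eq_zero (ha : 0 < a) (hb : 0 < b) {N : ℕ} (hN : N ≤ 3) : infLen a b N = 0 :=
  le_antisymm (by simpa using infLen_le_sqrt ha hb (w := 0) (h := 0) (by simpa using hN))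
    (infLen_nonneg N)

theorem exists_sqrt_le_infLen (ha : 0 < a) (hb : 0 < b) (n : ℕ) :
    ∃ w h : ℕ, w + h = n ∧ √((w * a) ^ 2 + (h * b) ^ 2) ≤ infLen a b (n + 3) := by
  obtain ⟨⟨w, h⟩, hwh, hmin⟩ := (Finset.HasAntidiagonal.antidiagonal n).exists_min_image
    (fun z ↦ √((z.1 * a) ^ 2 + (z.2 * b) ^ 2)) ⟨(0, n), by simp⟩
  refine ⟨w, h, Finset.HasAntidiagonal.mem_antidiagonal.1 hwh, le_csInf ?_ ?_⟩
  · obtain ⟨p, q, hpos, hcount, -⟩ :=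
      exists_segment_add_three_le_visitCount ha hb 0 n (δ := 1 / 2) (by norm_num)
    exact ⟨_, hpos, p, q, rfl, by simpa using hcount⟩
  · rintro _ ⟨-, p, q, rfl, hcount⟩
    obtain ⟨w', h', hsum, hle⟩ := exists_add_eq_sqrt_le_segLen ha hb hcount
    exact (hmin (w', h') (Finset.HasAntidiagonal.mem_antidiagonal.2 hsum)).trans hle

end InfLen

theorem stmt_11_general {a b : ℝ} (ha : 0 < a) (hb : 0 < b) :
    infLen a b 1 = 0 ∧ infLen a b 2 = 0 ∧
    ∀ N : ℕ, 3 ≤ N →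
      IsLeast {ℓ | ∃ w h : ℕ, w + h + 3 = N ∧ √((w * a) ^ 2 + (h * b) ^ 2) = ℓ} (infLen a b N) := by
  refine ⟨infLen_eq_zero ha hb (by norm_num), infLen_eq_zero ha hb (by norm_num), fun N hN ↦ ?_⟩
  obtain ⟨n, rfl⟩ := Nat.exists_eq_add_of_le' hN
  obtain ⟨w, h, rfl, hle⟩ := exists_sqrt_le_infLen ha hb n
  constructor
  · exact ⟨w, h, rfl, hle.antisymm (infLen_le_sqrt ha hb le_rfl)⟩
  · rintro _ ⟨w', h', hsum, rfl⟩
    exact infLen_le_sqrt ha hb hsum.ge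

theorem ceil_half_sq_add_le (w h : ℤ) : ⌈((w : ℝ) + h) ^ 2 / 2⌉ ≤ w ^ 2 + h ^ 2 := by
  rw [Int.ceil_le]
  push_cast
  linarith [sq_nonneg ((w : ℝ) - h)]

theorem ceil_half_sq_add_of_abs_sub_le_one {w h : ℤ} (hwh : |w - h| ≤ 1) :
    ⌈((w : ℝ) + h) ^ 2 / 2⌉ = w ^ 2 + h ^ 2 := by
  refine le_antisymm (ceil_half_sq_add_le w h) (Int.le_ceil_iff.2 ?_)
  have hsq : ((w : ℝ) - h) ^ 2 ≤ 1 := by exact_mod_cast (sq_le_one_iff_abs_le_one _).2 hwh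
  push_cast
  linarith

theorem isLeast_sqrt_sq_add_sq (n : ℕ) :
    IsLeast {ℓ | ∃ w h : ℕ, w + h = n ∧ √((w : ℝ) ^ 2 + h ^ 2) = ℓ} √(⌈(n : ℝ) ^ 2 / 2⌉ : ℤ) := by
  constructor
  · obtain ⟨w, h, rfl, hbalanced⟩ : ∃ w h : ℕ, w + h = n ∧ |(w : ℤ) - h| ≤ 1 :=
      ⟨n / 2, n - n / 2, by lia, abs_le.2 (by lia)⟩
    have hceil := ceil_half_sq_add_of_abs_sub_le_one hbalanced
    refine ⟨w, h, rfl, ?_⟩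
    push_cast at hceil ⊢
    rw [hceil]
    push_cast
    rfl
  · rintro _ ⟨w, h, rfl, rfl⟩
    have hceil : (⌈(((w : ℤ) : ℝ) + (h : ℤ)) ^ 2 / 2⌉ : ℝ) ≤ ((w ^ 2 + h ^ 2 : ℤ) : ℝ) :=
      Int.cast_le.2 (ceil_half_sq_add_le w h)
    apply Real.sqrt_le_sqrt
    push_cast at hceil ⊢
    exact hceil

theorem stmt_11 :
    infLen 1 1 1 = 0 ∧ infLen 1 1 2 = 0 ∧
    ∀ N : ℕ, 3 ≤ N →
      infLen 1 1 N = Real.sqrt ((⌈((N : ℝ) - 3) ^ 2 / 2⌉ : ℤ) : ℝ) := by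
  obtain ⟨h_one, h_two, hleast⟩ := stmt_11_general one_pos one_pos
  refine ⟨h_one, h_two, fun N hN ↦ ?_⟩
  obtain ⟨n, rfl⟩ := Nat.exists_eq_add_of_le' hN
  have hleast := hleast (n + 3) hN
  simp only [mul_one, add_left_inj] at hleast
  simpa using hleast.unique (isLeast_sqrt_sq_add_sq n)
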